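/- Let A be a commutative ring, n, m ≥ 1, let a, b, t_1, …, t_n, u_1, …, u_m ∈ A, and set f(Z) = a · ∏_{i=1}^n (Z − t_i) and g(Z) = b · ∏_{j=1}^m (Z − u_j). Then Res_{n,m}(f, g) = a^m · b^n · ∏_{i=1}^n ∏_{j=1}^m (t_i − u_j). -/

import Mathlib

open Polynomial

/-- The Sylvester matrix of `f` and `g`, viewed with formal degrees `n` and `m`:
an `(m + n) × (m + n)` matrix whose first `m` rows hold shifted coefficients of `f`
(from the coefficient of `Z^n` down to the constant term) and whose last `n` rows
hold shifted coefficients of `g`. -/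
noncomputable def sylvester {R : Type*} [CommRing R] (n m : ℕ) (f g : R[X]) :
    Matrix (Fin (m + n)) (Fin (m + n)) R :=
  Matrix.of fun i j =>
    Fin.addCases
      (fun i₀ : Fin m =>
        if (i₀ : ℕ) ≤ (j : ℕ) ∧ (j : ℕ) ≤ (i₀ : ℕ) + n then
          f.coeff (n - ((j : ℕ) - (i₀ : ℕ))) else 0)
      (fun i₁ : Fin n =>
        if (i₁ : ℕ) ≤ (j : ℕ) ∧ (j : ℕ) ≤ (i₁ : ℕ) + m then
          g.coeff (m - ((j : ℕ) - (i₁ : ℕ))) else 0)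
      i

/-- The resultant `Res_{n,m}(f, g)`: the determinant of the Sylvester matrix of `f` and `g`
viewed with formal degrees `n` and `m`. -/
noncomputable def res {R : Type*} [CommRing R] (n m : ℕ) (f g : R[X]) : R :=
  (sylvester n m f g).det

theorem res_eq_resultant_aux {R : Type*} [CommRing R] (n m : ℕ) (f g : R[X]) :
    res n m f g = Polynomial.resultant f g n m := by
  let e : Fin (n + m) ≃ Fin (m + n) := Fin.revPerm.trans (finCongr (add_comm n m))
  have h : (_root_.sylvester n m f g).submatrix e e = (Polynomial.sylvester f g n m).transpose := by
    ext k j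
    have hj := j.isLt
    simp only [Matrix.submatrix_apply, Matrix.transpose_apply, _root_.sylvester,
      Polynomial.sylvester, Matrix.of_apply]
    have hej : ((e j : Fin (m + n)) : ℕ) = n + m - (j + 1) := by simp [e, Fin.val_rev]
    rw [hej]
    induction k using Fin.addCases with
    | left k =>
      have hk := k.isLt
      have : e (Fin.castAdd m k) = Fin.natAdd m k.rev := by
        ext; simp [e, Fin.val_rev]; omega
      rw [this, Fin.addCases_right, Fin.addCases_left]
      simp only [Set.mem_Icc, Fin.val_rev]
      split_ifs with h1 h2 h2
      · congr 1; omega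
      · omega
      · omega
      · rfl
    | right k =>
      have hk := k.isLt
      have : e (Fin.natAdd n k) = Fin.castAdd n k.rev := by
        ext; simp [e, Fin.val_rev]; omega
      rw [this, Fin.addCases_left, Fin.addCases_right]
      simp only [Set.mem_Icc, Fin.val_rev]
      split_ifs with h1 h2 h2
      · congr 1; omega
      · omega
      · omega
      · rfl
  rw [res, Polynomial.resultant, ← Matrix.det_transpose (Polynomial.sylvester f g n m), ← h,
    Matrix.det_submatrix_equiv_self]

/-- For `f(Z) = a ∏_{i=1}^n (Z − t_i)` and `g(Z) = b ∏_{j=1}^m (Z − u_j)`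
over a commutative ring `A`, we have
`Res_{n,m}(f, g) = a^m b^n ∏_{i=1}^n ∏_{j=1}^m (t_i − u_j)`. -/
theorem res_prod_roots {A : Type*} [CommRing A] (n m : ℕ) (hn : 1 ≤ n) (hm : 1 ≤ m)
    (a b : A) (t : Fin n → A) (u : Fin m → A) :
    res n m (C a * ∏ i : Fin n, (X - C (t i))) (C b * ∏ j : Fin m, (X - C (u j))) =
      a ^ m * b ^ n * ∏ i : Fin n, ∏ j : Fin m, (t i - u j) := by
  nontriviality A
  have hd : ∀ (k : ℕ) (v : Fin k → A), (∏ i : Fin k, (X - C (v i))).natDegree = k := by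
    intro k v
    rw [natDegree_prod_of_monic _ _ (fun i _ => monic_X_sub_C _)]
    simp
  rw [res_eq_resultant_aux, resultant_C_mul_left, resultant_C_mul_right]
  have h := resultant_prod_left Finset.univ (fun i : Fin n => (X - C (t i)))
    (∏ j : Fin m, (X - C (u j))) m (by simp) (hd m u).le
  rw [hd n t] at h
  rw [h, ← mul_assoc]
  congr 1
  refine Finset.prod_congr rfl fun i _ => ?_
  rw [natDegree_X_sub_C, resultant_X_sub_C_left _ _ _ (hd m u).le, eval_prod]
  simp
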